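/- With the polytope P(μ, ν, a) ⊂ ℝ^3 defined by inequalities (1)-(10) as above (integer data, ν_1 < μ_1), if P is nonempty then P contains an integer point. -/

import Mathlib

/-!
Put `S = x + y + z`, `M = max ν₂ μ₂`, `N = ν₁ + ν₂`. As the parts of `a` add up
to `n`, the pair inequalities are upper bounds `w ≤ S - ν₃` and `w ≤ S - (n - ν₁ - aᵢ)` on single
coordinates, and the last three families read `(S - N + aᵢ) / 2 ≤ w ≤ (S - M + aᵢ) / 2`.
Thus the slice of the polytope of fixed `S` is a box cut by the plane `x + y + z = S`, each side
of the box being a maximum or minimum of affine functions of `S`; it is nonempty if and only if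
the box is, and `S` lies between the sums of the lower and of the upper ends.

* The sum can be made an integer (`exists_half`). In the nonemptiness conditions of the slice,
  every upper bound on `S` is an integer: `Σ (S - N + aᵢ) / 2 ≤ S` is `S ≤ 3N - n`, and
  `S ≤ p + q + (S - M + aᵢ) / 2` is `S ≤ 2p + 2q - M + aᵢ`. Hence the slice at `T = ⌈S⌉`
  is nonempty, and as its box has half-integer ends it contains a half-integer point.
* A half-integer point of integer sum can be rounded (`round_half`). If it is not integral, exactly
  two coordinates, say `x` and `y`, are proper half-integers. Adding `1/2` to both violates
  nothing unless `x + y - z = N - a₃`. In that case one of the moves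
  `(1/2, -1/2)`, `(-1/2, 1/2)`, `(-1/2, -1/2)` works: inequalities with integer bounds on
  half-integers have slack, so few inequalities can block these moves, and not all of them are
  blocked because `N ≥ 2n / 3` exceeds both `M` and `n / 2` (here `n > 0`, as `x` is not an integer).
-/

/-- Membership in the polytope `𝒫(μ,ν;a) ⊂ ℝ³` of the paper, defined by the
inequality families (1)–(10). -/
def InP (μ1 μ2 ν1 ν2 ν3 a1 a2 a3 : ℤ) (x y z : ℝ) : Prop :=
  -- (1)
  ((a1 : ℝ) - min (ν2 : ℝ) (min (μ2 : ℝ) ((a1 : ℝ) / 2)) ≤ x ∧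
      x ≤ min (a1 : ℝ) (ν1 : ℝ)) ∧
  -- (2)
  ((a2 : ℝ) - min (ν2 : ℝ) (min (μ2 : ℝ) ((a2 : ℝ) / 2)) ≤ y ∧
      y ≤ min (a2 : ℝ) (ν1 : ℝ)) ∧
  -- (3)
  ((a3 : ℝ) - min (ν2 : ℝ) (min (μ2 : ℝ) ((a3 : ℝ) / 2)) ≤ z ∧
      z ≤ min (a3 : ℝ) (ν1 : ℝ)) ∧
  -- (4)
  (max (ν3 : ℝ) ((a1 : ℝ) + (a2 : ℝ) - (ν1 : ℝ)) ≤ x + y) ∧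
  -- (5)
  (max (ν3 : ℝ) ((a1 : ℝ) + (a3 : ℝ) - (ν1 : ℝ)) ≤ x + z) ∧
  -- (6)
  (max (ν3 : ℝ) ((a2 : ℝ) + (a3 : ℝ) - (ν1 : ℝ)) ≤ y + z) ∧
  -- (7)
  ((μ1 : ℝ) ≤ x + y + z) ∧
  -- (8)
  (max (ν2 : ℝ) (μ2 : ℝ) - (a1 : ℝ) ≤ -x + y + z ∧
      -x + y + z ≤ (ν1 : ℝ) + (ν2 : ℝ) - (a1 : ℝ)) ∧
  -- (9)
  (max (ν2 : ℝ) (μ2 : ℝ) - (a2 : ℝ) ≤ x - y + z ∧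
      x - y + z ≤ (ν1 : ℝ) + (ν2 : ℝ) - (a2 : ℝ)) ∧
  -- (10)
  (max (ν2 : ℝ) (μ2 : ℝ) - (a3 : ℝ) ≤ x + y - z ∧
      x + y - z ≤ (ν1 : ℝ) + (ν2 : ℝ) - (a3 : ℝ))

/-- The conditions on one coordinate `w` of a point of the polytope with coordinate sum `T`, where
`a` is the part of the composition belonging to `w`. They are written for the doubled coordinate
`X = 2 w`, so that half-integer points are described by integers. -/
def Coord (n μ2 ν1 ν2 ν3 a T X : ℤ) : Prop :=
  2 * a - 2 * ν2 ≤ X ∧ 2 * a - 2 * μ2 ≤ X ∧ a ≤ X ∧ X ≤ 2 * a ∧ X ≤ 2 * ν1 ∧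
  X ≤ 2 * T - 2 * ν3 ∧ X ≤ 2 * T - 2 * (n - ν1 - a) ∧
  ν2 - a ≤ T - X ∧ μ2 - a ≤ T - X ∧ T - X ≤ ν1 + ν2 - a

/-- Rounding the sum `S` up to `T` keeps the interval `[L, U]` of admissible doubled coordinates
nonempty. The disjunctions record how fast its ends move with `S`: twice the coordinate bound has
slope `0` or `1` for `L`, and slope `0`, `1` or `2` for `U`. -/
lemma coord_interval {n μ2 ν1 ν2 ν3 a T : ℤ} {S x : ℝ}
    (hST : S ≤ T) (hT : ∀ k : ℤ, S ≤ k → T ≤ k)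
    (h1 : (a : ℝ) - ν2 ≤ x) (h2 : (a : ℝ) - μ2 ≤ x) (h3 : (a : ℝ) / 2 ≤ x)
    (h4 : x ≤ a) (h5 : x ≤ ν1) (h6 : (ν3 : ℝ) ≤ S - x) (h7 : (n : ℝ) - a - ν1 ≤ S - x)
    (h8 : (ν2 : ℝ) - a ≤ S - 2 * x) (h9 : (μ2 : ℝ) - a ≤ S - 2 * x)
    (h10 : S - 2 * x ≤ (ν1 : ℝ) + ν2 - a) :
    ∃ L U : ℤ, L ≤ U ∧ ((L : ℝ) ≤ 2 * x ∨ L = T - (ν1 + ν2) + a) ∧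
      ((∃ u : ℤ, U = 2 * u ∧ 2 * x ≤ U) ∨
        (U = T - max ν2 μ2 + a ∧ 2 * x ≤ S - (max ν2 μ2 : ℤ) + a) ∨
        2 * x + 2 * (T - S) ≤ U) ∧
      (∀ X, L ≤ X → X ≤ U → Coord n μ2 ν1 ν2 ν3 a T X) := by
  have lows : ∃ L : ℤ, 2 * a - 2 * ν2 ≤ L ∧ 2 * a - 2 * μ2 ≤ L ∧ a ≤ L ∧
      T - (ν1 + ν2) + a ≤ L ∧ ((L : ℝ) ≤ 2 * x ∨ L = T - (ν1 + ν2) + a) := by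
    have k : ((max (2 * a - 2 * ν2) (max (2 * a - 2 * μ2) a) : ℤ) : ℝ) ≤ 2 * x := by
      push_cast
      exact max_le (by linarith) (max_le (by linarith) (by linarith))
    rcases le_total (max (2 * a - 2 * ν2) (max (2 * a - 2 * μ2) a)) (T - (ν1 + ν2) + a) with h | h
    · exact ⟨T - (ν1 + ν2) + a, by omega, by omega, by omega, by omega, Or.inr rfl⟩
    · exact ⟨_, by omega, by omega, by omega, h, Or.inl k⟩
  have hM : 2 * x ≤ S - (max ν2 μ2 : ℤ) + a := by
    push_cast
    rcases max_cases (ν2 : ℝ) μ2 with h | h <;> linarith [h.1]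
  have ups : ∃ U : ℤ, U ≤ 2 * a ∧ U ≤ 2 * ν1 ∧ U ≤ 2 * T - 2 * ν3 ∧
      U ≤ 2 * T - 2 * (n - ν1 - a) ∧ U ≤ T - max ν2 μ2 + a ∧
      (U = 2 * a ∨ U = 2 * ν1 ∨ U = T - max ν2 μ2 + a ∨
        U = 2 * T - 2 * ν3 ∨ U = 2 * T - 2 * (n - ν1 - a)) :=
    ⟨min (2 * a) (min (2 * ν1) (min (2 * T - 2 * ν3) (min (2 * T - 2 * (n - ν1 - a))
      (T - max ν2 μ2 + a)))), by omega, by omega, by omega, by omega, by omega, by omega⟩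
  obtain ⟨L, l1, l2, l3, l4, hL⟩ := lows
  obtain ⟨U, u1, u2, u3, u4, u5, hU⟩ := ups
  refine ⟨L, U, ?_, hL, ?_, ?_⟩
  · rcases hL with hL | hL
    · have : (L : ℝ) ≤ U := by
        rcases hU with h | h | h | h | h <;> rw [h] <;> push_cast at hM ⊢ <;> linarith
      exact_mod_cast this
    · -- With both ends moving, each comparison is either monotone in `S` or an integer bound on `S`.
      rcases hU with h | h | h | h | h
      · have := hT (ν1 + ν2 + a) (by push_cast; linarith)
        omega
      · have := hT (2 * ν1 + ν1 + ν2 - a) (by push_cast; linarith)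
        omega
      · have : (max ν2 μ2 : ℤ) ≤ ((ν1 + ν2 : ℤ) : ℝ) := by
          push_cast at hM ⊢
          linarith
        have : max ν2 μ2 ≤ ν1 + ν2 := by exact_mod_cast this
        omega
      · have : ((2 * ν3 - (ν1 + ν2) + a : ℤ) : ℝ) ≤ T := by push_cast; linarith
        have : 2 * ν3 - (ν1 + ν2) + a ≤ T := by exact_mod_cast this
        omega
      · have : ((2 * (n - ν1 - a) - (ν1 + ν2) + a : ℤ) : ℝ) ≤ T := by push_cast; linarith
        have : 2 * (n - ν1 - a) - (ν1 + ν2) + a ≤ T := by exact_mod_cast this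
        omega
  · rcases hU with h | h | h | h | h
    · exact Or.inl ⟨a, h, by rw [h]; push_cast; linarith⟩
    · exact Or.inl ⟨ν1, h, by rw [h]; push_cast; linarith⟩
    · exact Or.inr (Or.inl ⟨h, hM⟩)
    · exact Or.inr (Or.inr (by rw [h]; push_cast; linarith))
    · exact Or.inr (Or.inr (by rw [h]; push_cast; linarith))
  · intro X h h'
    unfold Coord
    omega

/-- The lower ends of the three intervals at `T = ⌈S⌉` do not add up to more than `2 * T`. -/
lemma lower_sum {T N a1 a2 a3 L1 L2 L3 : ℤ} {S x y z : ℝ}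
    (hST : S ≤ T) (hT : ∀ k : ℤ, S ≤ k → T ≤ k) (hS : S = x + y + z)
    (n1 : S - N + a1 ≤ 2 * x) (n2 : S - N + a2 ≤ 2 * y) (n3 : S - N + a3 ≤ 2 * z)
    (c1 : (L1 : ℝ) ≤ 2 * x ∨ L1 = T - N + a1) (c2 : (L2 : ℝ) ≤ 2 * y ∨ L2 = T - N + a2)
    (c3 : (L3 : ℝ) ≤ 2 * z ∨ L3 = T - N + a3) : L1 + L2 + L3 ≤ 2 * T := by
  have hN := hT (3 * N - (a1 + a2 + a3)) (by push_cast; linarith)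
  clear hT
  -- If at most two of the lower ends move, their sum grows no faster than `2 * S`; `hN` settles
  -- the case of three moving ends.
  rcases c1 with c1 | c1 <;> rcases c2 with c2 | c2 <;> rcases c3 with c3 | c3
  all_goals
    rify at *
    linarith

/-- The upper ends of the three intervals at `T = ⌈S⌉` add up to at least `2 * T`. -/
lemma upper_sum {T M a1 a2 a3 U1 U2 U3 : ℤ} {S x y z : ℝ}
    (hST : S ≤ T) (hT : ∀ k : ℤ, S ≤ k → T ≤ k) (hS : S = x + y + z)
    (d1 : (∃ u : ℤ, U1 = 2 * u ∧ 2 * x ≤ U1) ∨ (U1 = T - M + a1 ∧ 2 * x ≤ S - M + a1) ∨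
      2 * x + 2 * (T - S) ≤ U1)
    (d2 : (∃ u : ℤ, U2 = 2 * u ∧ 2 * y ≤ U2) ∨ (U2 = T - M + a2 ∧ 2 * y ≤ S - M + a2) ∨
      2 * y + 2 * (T - S) ≤ U2)
    (d3 : (∃ u : ℤ, U3 = 2 * u ∧ 2 * z ≤ U3) ∨ (U3 = T - M + a3 ∧ 2 * z ≤ S - M + a3) ∨
      2 * z + 2 * (T - S) ≤ U3) : 2 * T ≤ U1 + U2 + U3 := by
  rcases d1 with ⟨u1, d1, f1⟩ | ⟨d1, f1⟩ | d1 <;> rcases d2 with ⟨u2, d2, f2⟩ | ⟨d2, f2⟩ | d2 <;>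
    rcases d3 with ⟨u3, d3, f3⟩ | ⟨d3, f3⟩ | d3
  case inl.inl.inl =>
    subst d1 d2 d3
    have := hT (u1 + u2 + u3) (by push_cast at *; linarith)
    omega
  case inl.inl.inr.inl =>
    have := hT (U1 + U2 - M + a3) (by push_cast; linarith)
    omega
  case inl.inr.inl.inl =>
    have := hT (U1 + U3 - M + a2) (by push_cast; linarith)
    omega
  case inr.inl.inl.inl =>
    have := hT (U2 + U3 - M + a1) (by push_cast; linarith)
    omega
  -- In the remaining cases the sum of the upper ends grows at least as fast as `2 * S`.
  all_goals
    clear hT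
    rify at *
    linarith

/-- A nonempty polytope contains a half-integer point with integer coordinate sum. -/
lemma exists_half {n μ1 μ2 ν1 ν2 ν3 a1 a2 a3 : ℤ} (ha : a1 + a2 + a3 = n) {x y z : ℝ}
    (h : InP μ1 μ2 ν1 ν2 ν3 a1 a2 a3 x y z) :
    ∃ T X Y Z : ℤ, X + Y + Z = 2 * T ∧ μ1 ≤ T ∧ Coord n μ2 ν1 ν2 ν3 a1 T X ∧
      Coord n μ2 ν1 ν2 ν3 a2 T Y ∧ Coord n μ2 ν1 ν2 ν3 a3 T Z := by
  simp only [InP, sub_le_iff_le_add, le_min_iff, max_le_iff, ← min_add_add_left] at h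
  obtain ⟨⟨⟨x1, x2, x3⟩, x4, x5⟩, ⟨⟨y1, y2, y3⟩, y4, y5⟩, ⟨⟨z1, z2, z3⟩, z4, z5⟩,
    ⟨p1, p2⟩, ⟨q1, q2⟩, ⟨r1, r2⟩, hS, ⟨⟨s1, s2⟩, s3⟩, ⟨⟨t1, t2⟩, t3⟩, ⟨⟨v1, v2⟩, v3⟩⟩ := h
  have haR : (a1 : ℝ) + a2 + a3 = n := by exact_mod_cast ha
  obtain ⟨S, hSdef⟩ : ∃ S, S = x + y + z := ⟨_, rfl⟩
  have hST : S ≤ ⌈S⌉ := Int.le_ceil S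
  have hT : ∀ k : ℤ, S ≤ k → ⌈S⌉ ≤ k := fun k hk => Int.ceil_le.2 hk
  generalize ⌈S⌉ = T at hST hT
  obtain ⟨L1, U1, b1, c1, d1, e1⟩ := coord_interval (n := n) (μ2 := μ2) (ν1 := ν1) (ν2 := ν2)
    (ν3 := ν3) (a := a1) (x := x) hST hT (by linarith) (by linarith) (by linarith) (by linarith)
    (by linarith) (by linarith) (by linarith) (by linarith) (by linarith) (by linarith)
  obtain ⟨L2, U2, b2, c2, d2, e2⟩ := coord_interval (n := n) (μ2 := μ2) (ν1 := ν1) (ν2 := ν2)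
    (ν3 := ν3) (a := a2) (x := y) hST hT (by linarith) (by linarith) (by linarith) (by linarith)
    (by linarith) (by linarith) (by linarith) (by linarith) (by linarith) (by linarith)
  obtain ⟨L3, U3, b3, c3, d3, e3⟩ := coord_interval (n := n) (μ2 := μ2) (ν1 := ν1) (ν2 := ν2)
    (ν3 := ν3) (a := a3) (x := z) hST hT (by linarith) (by linarith) (by linarith) (by linarith)
    (by linarith) (by linarith) (by linarith) (by linarith) (by linarith) (by linarith)
  have hL : L1 + L2 + L3 ≤ 2 * T :=
    lower_sum hST hT hSdef (N := ν1 + ν2) (by push_cast; linarith)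
      (by push_cast; linarith) (by push_cast; linarith) c1 c2 c3
  have hU : 2 * T ≤ U1 + U2 + U3 := upper_sum hST hT hSdef d1 d2 d3
  obtain ⟨X, Y, Z, hX, hX', hY, hY', hZ, hZ', hsum⟩ : ∃ X Y Z : ℤ, L1 ≤ X ∧ X ≤ U1 ∧ L2 ≤ Y ∧
      Y ≤ U2 ∧ L3 ≤ Z ∧ Z ≤ U3 ∧ X + Y + Z = 2 * T :=
    ⟨min U1 (2 * T - L2 - L3), min U2 (2 * T - min U1 (2 * T - L2 - L3) - L3),
      2 * T - min U1 (2 * T - L2 - L3) - min U2 (2 * T - min U1 (2 * T - L2 - L3) - L3),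
      by omega, by omega, by omega, by omega, by omega, by omega, by omega⟩
  have hμT : (μ1 : ℝ) ≤ T := by linarith
  exact ⟨T, X, Y, Z, hsum, by exact_mod_cast hμT, e1 X hX hX', e2 Y hY hY', e3 Z hZ hZ'⟩

/-- A half-integer point of integer sum whose first two coordinates are not integers can be
rounded to an integer point by moving these two coordinates by `1/2`. -/
lemma round_half {n μ1 μ2 ν1 ν2 ν3 a1 a2 a3 T X Y Z : ℤ}
    (hμ : μ1 ≥ μ2 ∧ μ2 ≥ 0 ∧ μ1 + μ2 = n)
    (hν : ν1 ≥ ν2 ∧ ν2 ≥ ν3 ∧ ν3 ≥ 0 ∧ ν1 + ν2 + ν3 = n)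
    (ha : a1 ≥ 0 ∧ a2 ≥ 0 ∧ a3 ≥ 0 ∧ a1 + a2 + a3 = n)
    (hsum : X + Y + Z = 2 * T) (hT : μ1 ≤ T) (hX : Coord n μ2 ν1 ν2 ν3 a1 T X)
    (hY : Coord n μ2 ν1 ν2 ν3 a2 T Y) (hZ : Coord n μ2 ν1 ν2 ν3 a3 T Z)
    (oX : X % 2 = 1) (oY : Y % 2 = 1) :
    ∃ u v w : ℤ, μ1 ≤ u + v + w ∧ Coord n μ2 ν1 ν2 ν3 a1 (u + v + w) (2 * u) ∧
      Coord n μ2 ν1 ν2 ν3 a2 (u + v + w) (2 * v) ∧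
      Coord n μ2 ν1 ν2 ν3 a3 (u + v + w) (2 * w) := by
  obtain ⟨p, rfl⟩ : ∃ p, X = 2 * p + 1 := ⟨X / 2, by omega⟩
  obtain ⟨q, rfl⟩ : ∃ q, Y = 2 * q + 1 := ⟨Y / 2, by omega⟩
  obtain ⟨r, rfl⟩ : ∃ r, Z = 2 * r := ⟨Z / 2, by omega⟩
  obtain rfl : T = p + q + r + 1 := by omega
  obtain ⟨M, hM1, hM2, hM⟩ : ∃ M, ν2 ≤ M ∧ μ2 ≤ M ∧ (M = ν2 ∨ M = μ2) :=
    ⟨max ν2 μ2, by omega, by omega, by omega⟩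
  obtain ⟨hμ1, hμ2, hμ3⟩ := hμ
  obtain ⟨hν1, hν2, hν3, hν4⟩ := hν
  obtain ⟨ha1, ha2, ha3, ha4⟩ := ha
  obtain ⟨x1, x2, x3, x4, x5, x6, x7, x8, x9, x10⟩ := hX
  obtain ⟨y1, y2, y3, y4, y5, y6, y7, y8, y9, y10⟩ := hY
  obtain ⟨z1, z2, z3, z4, z5, z6, z7, z8, z9, z10⟩ := hZ
  have x11 : M - a1 ≤ p + q + r + 1 - (2 * p + 1) := by rcases hM with rfl | rfl <;> assumption
  have y11 : M - a2 ≤ p + q + r + 1 - (2 * q + 1) := by rcases hM with rfl | rfl <;> assumption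
  have z11 : M - a3 ≤ p + q + r + 1 - 2 * r := by rcases hM with rfl | rfl <;> assumption
  unfold Coord
  by_cases h1 : p + q + r + 1 - 2 * r = ν1 + ν2 - a3
  swap
  · clear hM
    refine ⟨p + 1, q + 1, r, ?_, ⟨?_, ?_, ?_, ?_, ?_, ?_, ?_, ?_, ?_, ?_⟩,
      ⟨?_, ?_, ?_, ?_, ?_, ?_, ?_, ?_, ?_, ?_⟩, ⟨?_, ?_, ?_, ?_, ?_, ?_, ?_, ?_, ?_, ?_⟩⟩ <;> omega
  by_cases h2 : 2 * q + 1 = a2 ∨ p + q + r + 1 - (2 * p + 1) = M - a1 ∨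
      p + q + r + 1 - (2 * q + 1) = ν1 + ν2 - a2
  swap
  · push Not at h2
    obtain ⟨h2, h2', h2''⟩ := h2
    clear hM
    refine ⟨p + 1, q, r, ?_, ⟨?_, ?_, ?_, ?_, ?_, ?_, ?_, ?_, ?_, ?_⟩,
      ⟨?_, ?_, ?_, ?_, ?_, ?_, ?_, ?_, ?_, ?_⟩, ⟨?_, ?_, ?_, ?_, ?_, ?_, ?_, ?_, ?_, ?_⟩⟩ <;> omega
  by_cases h3 : 2 * p + 1 = a1 ∨ p + q + r + 1 - (2 * q + 1) = M - a2 ∨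
      p + q + r + 1 - (2 * p + 1) = ν1 + ν2 - a1
  swap
  · push Not at h3
    obtain ⟨h3, h3', h3''⟩ := h3
    clear hM
    refine ⟨p, q + 1, r, ?_, ⟨?_, ?_, ?_, ?_, ?_, ?_, ?_, ?_, ?_, ?_⟩,
      ⟨?_, ?_, ?_, ?_, ?_, ?_, ?_, ?_, ?_, ?_⟩, ⟨?_, ?_, ?_, ?_, ?_, ?_, ?_, ?_, ?_, ?_⟩⟩ <;> omega
  have hMN : M < ν1 + ν2 := by omega
  -- The two lower ends `M - a₁`, `M - a₂` can both be attained, namely when `M = n / 2`; every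
  -- other pair of blocking equalities is contradictory.
  obtain ⟨h2, h3⟩ : p + q + r + 1 - (2 * p + 1) = M - a1 ∧
      p + q + r + 1 - (2 * q + 1) = M - a2 := by
    rcases h2 with h2 | h2 | h2 <;> rcases h3 with h3 | h3 | h3 <;> omega
  have hMn : 2 * M = n := by omega
  refine ⟨p, q, r, ?_, ⟨?_, ?_, ?_, ?_, ?_, ?_, ?_, ?_, ?_, ?_⟩,
    ⟨?_, ?_, ?_, ?_, ?_, ?_, ?_, ?_, ?_, ?_⟩, ⟨?_, ?_, ?_, ?_, ?_, ?_, ?_, ?_, ?_, ?_⟩⟩ <;> omega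

/-- With integer data: `μ` a two-row partition and `ν` a three-row
partition of `n` with `ν₁ < μ₁`, and `a` a composition of `n` into three nonnegative
parts, if the polytope `𝒫(μ,ν;a)` is nonempty then it contains an integer point. -/
theorem nonempty_implies_integer_point (n μ1 μ2 ν1 ν2 ν3 a1 a2 a3 : ℤ)
    (hμ : μ1 ≥ μ2 ∧ μ2 ≥ 0 ∧ μ1 + μ2 = n)
    (hν : ν1 ≥ ν2 ∧ ν2 ≥ ν3 ∧ ν3 ≥ 0 ∧ ν1 + ν2 + ν3 = n)
    (ha : a1 ≥ 0 ∧ a2 ≥ 0 ∧ a3 ≥ 0 ∧ a1 + a2 + a3 = n)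
    (hνμ : ν1 < μ1)
    (h : ∃ x y z : ℝ, InP μ1 μ2 ν1 ν2 ν3 a1 a2 a3 x y z) :
    ∃ u v w : ℤ, InP μ1 μ2 ν1 ν2 ν3 a1 a2 a3 (u : ℝ) (v : ℝ) (w : ℝ) := by
  obtain ⟨x, y, z, h⟩ := h
  obtain ⟨T, X, Y, Z, hsum, hT, hX, hY, hZ⟩ := exists_half ha.2.2.2 h
  obtain ⟨u, v, w, hS, hu, hv, hw⟩ :
      ∃ u v w : ℤ, μ1 ≤ u + v + w ∧ Coord n μ2 ν1 ν2 ν3 a1 (u + v + w) (2 * u) ∧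
        Coord n μ2 ν1 ν2 ν3 a2 (u + v + w) (2 * v) ∧
        Coord n μ2 ν1 ν2 ν3 a3 (u + v + w) (2 * w) := by
    have parity : (X % 2 = 1 ∧ Y % 2 = 1) ∨ (X % 2 = 1 ∧ Z % 2 = 1) ∨ (Y % 2 = 1 ∧ Z % 2 = 1) ∨
        (X % 2 = 0 ∧ Y % 2 = 0 ∧ Z % 2 = 0) := by omega
    rcases parity with ⟨o, o'⟩ | ⟨o, o'⟩ | ⟨o, o'⟩ | ⟨o, o', o''⟩
    · exact round_half hμ hν ha hsum hT hX hY hZ o o'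
    · obtain ⟨u, w, v, k, k1, k2, k3⟩ := round_half (a1 := a1) (a2 := a3) (a3 := a2)
        hμ hν (by omega) (by omega) hT hX hZ hY o o'
      rw [add_right_comm] at k k1 k2 k3
      exact ⟨u, v, w, k, k1, k3, k2⟩
    · obtain ⟨v, w, u, k, k1, k2, k3⟩ := round_half (a1 := a2) (a2 := a3) (a3 := a1)
        hμ hν (by omega) (by omega) hT hY hZ hX o o'
      rw [add_comm (v + w), ← add_assoc] at k k1 k2 k3
      exact ⟨u, v, w, k, k3, k1, k2⟩
    · obtain ⟨u, rfl⟩ : ∃ u, X = 2 * u := ⟨X / 2, by omega⟩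
      obtain ⟨v, rfl⟩ : ∃ v, Y = 2 * v := ⟨Y / 2, by omega⟩
      obtain ⟨w, rfl⟩ : ∃ w, Z = 2 * w := ⟨Z / 2, by omega⟩
      obtain rfl : T = u + v + w := by omega
      exact ⟨u, v, w, hT, hX, hY, hZ⟩
  obtain ⟨-, -, -, haS⟩ := ha
  refine ⟨u, v, w, ?_⟩
  unfold Coord at hu hv hw
  rify at *
  simp only [InP, sub_le_iff_le_add, le_min_iff, max_le_iff, ← min_add_add_left]
  refine ⟨⟨⟨?_, ?_, ?_⟩, ?_, ?_⟩, ⟨⟨?_, ?_, ?_⟩, ?_, ?_⟩, ⟨⟨?_, ?_, ?_⟩, ?_, ?_⟩,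
    ⟨?_, ?_⟩, ⟨?_, ?_⟩, ⟨?_, ?_⟩, ?_, ⟨⟨?_, ?_⟩, ?_⟩, ⟨⟨?_, ?_⟩, ?_⟩, ⟨⟨?_, ?_⟩, ?_⟩⟩ <;> linarith
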